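/- The map sending an A-lamination G over ℝ to the function a(G) with a_{kl}(G) = (1/2)·I_{kl}(G) on segments (and a_{kk} = 0) is a bijection from the set of A-laminations over ℝ onto L(ℝ), the set of ℝ-tropical points of the cluster A-variety of type A_n in its coordinate model; under this bijection the tropicalized cluster variable A_{ij}^t evaluated at a lamination l equals a_{ij}(l) for every diagonal {ij}. -/

import Mathlib

/-!
Write `Δ²f (a, b) = f (a-1) (b-1) + f a b - f (a-1) b - f a (b-1)` for the mixed second difference
on the cyclic group of vertices.  The weight matrix of a lamination is recovered from its image `x`
as `w = Δ²x`, and this formula also defines the inverse map.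

* Sums of cyclic differences telescope (`sum_cycInt_sub`), so if `w = Δ²f`, the total weight between
  the blocks `(p, q]` and `(r, s]` is `f p r + f q s - f p s - f q r` (`sum_block`), and
  `I_{kl}(w) = f k l + f l k - f k k - f l l` (`Icyc_sndDiff`).
* A function with total sum zero is a cyclic difference (`exists_potential`), so a symmetric
  matrix with zero row sums is `Δ²F` for a symmetric `F`.  As `½ I_{kl}(w)` differs from `F k l`
  only by a function of `k` plus a function of `l`, it too has mixed second difference `w`
  (`Lam.eq_sndDiff`).
* Cut the polygon at clockwise `p, q, r, s` into the blocks `A = (p, q]`, `B = (q, r]`,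
  `C = (r, s]`, `D = (s, p]`.  The two differences between the left side of the tropical Plücker
  relation and the two arguments of its maximum are the weights between `B, D` and between `A, C`.
  The relation therefore says that both block weights are nonnegative and one of them vanishes.
  Segments between opposite blocks are diagonals, and a segment from `A` to `C` crosses any segment
  from `B` to `D`; so these relations are equivalent to nonnegativity and noncrossing of `w`.
-/

open Finset

/-- Vertices `i, j` of the `(n+3)`-gon (labelled by `ZMod (n+3)`) are adjacent,
i.e. the segment `{i j}` is an edge. -/
def IsEdge (n : ℕ) (i j : ZMod (n + 3)) : Prop := i = j + 1 ∨ j = i + 1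

/-- The segment `{i j}` is a diagonal of the `(n+3)`-gon. -/
def IsDiag (n : ℕ) (i j : ZMod (n + 3)) : Prop := i ≠ j ∧ ¬ IsEdge n i j

/-- The distinct vertices `p, q, r, s` are in clockwise order. -/
def Clockwise (n : ℕ) (p q r s : ZMod (n + 3)) : Prop :=
  0 < (q - p).val ∧ (q - p).val < (r - p).val ∧ (r - p).val < (s - p).val

/-- The segments `{i j}` and `{k l}` cross: their endpoints interlace in cyclic order. -/
def Cross (n : ℕ) (i j k l : ZMod (n + 3)) : Prop :=
  Clockwise n i k j l ∨ Clockwise n i l j k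

/-- `L(ℝ)`: the set of `ℝ`-tropical points of the cluster `A`-variety of type `Aₙ`
in its coordinate model: symmetric real functions on pairs of vertices, vanishing on
the diagonal and on edges, satisfying the tropical Plücker relations. -/
structure TropPt (n : ℕ) where
  x : ZMod (n + 3) → ZMod (n + 3) → ℝ
  symm : ∀ i j, x i j = x j i
  diag_zero : ∀ i, x i i = 0
  edge_zero : ∀ i j, IsEdge n i j → x i j = 0
  pluecker : ∀ p q r s, Clockwise n p q r s →
    x p r + x q s = max (x p q + x r s) (x q r + x p s)

/-- A partial triangulation: a set of pairwise non-crossing diagonals. -/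
structure PartialTri (n : ℕ) where
  diags : Finset (Sym2 (ZMod (n + 3)))
  mem_isDiag : ∀ i j, s(i, j) ∈ diags → IsDiag n i j
  noncross : ∀ i j k l, s(i, j) ∈ diags → s(k, l) ∈ diags → ¬ Cross n i j k l

/-- The diagonal `{i j}` belongs to the supplement `S(T)`: it is not in `T` and
`T ∪ {i j}` is again a partial triangulation. -/
def InSupp (n : ℕ) (T : PartialTri n) (i j : ZMod (n + 3)) : Prop :=
  IsDiag n i j ∧ s(i, j) ∉ T.diags ∧
    ∀ k l, s(k, l) ∈ T.diags → ¬ Cross n i j k l ∧ ¬ Cross n k l i j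

/-- The face `F_c^T` of a partial triangulation `T`. -/
def Face (n : ℕ) (T : PartialTri n) (c : ZMod (n + 3) → ZMod (n + 3) → ℝ) :
    Set (TropPt n) :=
  {x | (∀ i j, s(i, j) ∈ T.diags → x.x i j = c i j) ∧
       (∀ i j, InSupp n T i j → x.x i j ≤ c i j)}

/-- The polytope `F_c^∅ = {x ∈ L(ℝ) : x_{ij} ≤ c_{ij} for all diagonals}`. -/
def TropPoly (n : ℕ) (c : ZMod (n + 3) → ZMod (n + 3) → ℝ) : Set (TropPt n) :=
  {x | ∀ i j, IsDiag n i j → x.x i j ≤ c i j}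

/-- `F_c^∅` is a Stasheff polytope: faces reverse inclusions of partial triangulations. -/
def IsStasheff (n : ℕ) (c : ZMod (n + 3) → ZMod (n + 3) → ℝ) : Prop :=
  ∀ T₁ T₂ : PartialTri n, T₁.diags ⊆ T₂.diags → Face n T₂ c ⊆ Face n T₁ c

/-- A tropicalized cluster monomial: `F(x) = Σ_{{ij}∈T} n_{ij} x_{ij}` for some complete
triangulation `T` and nonnegative integers `n_{ij}` (each unordered pair is counted once,
whence the factor `1/2` in the symmetric double sum). -/
def IsClusterMono (n : ℕ) (F : TropPt n → ℝ) : Prop :=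
  ∃ (T : PartialTri n) (m : ZMod (n + 3) → ZMod (n + 3) → ℕ),
    T.diags.card = n ∧ (∀ i j, m i j = m j i) ∧
    (∀ i j, s(i, j) ∉ T.diags → m i j = 0) ∧
    ∀ x : TropPt n, F x =
      (1 / 2) * ∑ i : ZMod (n + 3), ∑ j : ZMod (n + 3), (m i j : ℝ) * x.x i j

/-- The cyclic interval `{k+1, …, l}` of vertices (empty when `k = l`). -/
def cycInt (n : ℕ) (k l : ZMod (n + 3)) : Finset (ZMod (n + 3)) :=
  Finset.univ.filter fun v => 1 ≤ (v - k).val ∧ (v - k).val ≤ (l - k).val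

/-- `I_{kl}(w) = Σ_{a∈I, b∉I} w_{ab}` where `I = {k+1,…,l}` is the cyclic interval;
in particular `I_{kk}(w) = 0`. -/
def Icyc (n : ℕ) {M : Type*} [AddCommMonoid M]
    (w : ZMod (n + 3) → ZMod (n + 3) → M) (k l : ZMod (n + 3)) : M :=
  ∑ a ∈ cycInt n k l, ∑ b ∈ (cycInt n k l)ᶜ, w a b

/-- An `A`-lamination on the `(n+3)`-gon over `ℝ`: a symmetric real matrix with zero
diagonal, nonnegative on diagonals, no two crossing diagonals both of nonzero weight,
and all row sums `R_p` equal to zero. -/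
structure Lam (n : ℕ) where
  w : ZMod (n + 3) → ZMod (n + 3) → ℝ
  symm : ∀ i j, w i j = w j i
  diag_zero : ∀ i, w i i = 0
  nonneg : ∀ i j, IsDiag n i j → 0 ≤ w i j
  noncross : ∀ i j k l, IsDiag n i j → IsDiag n k l → Cross n i j k l →
    w i j = 0 ∨ w k l = 0
  balanced : ∀ p, ∑ j, w p j = 0

/-- The mixed second difference of `f` on the cyclic group of vertices. -/
def sndDiff (n : ℕ) (f : ZMod (n + 3) → ZMod (n + 3) → ℝ) (a b : ZMod (n + 3)) : ℝ :=
  f (a - 1) (b - 1) + f a b - f (a - 1) b - f a (b - 1)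

/-! ### Cyclic order and crossing -/

/-- The integer offset of `x` from `y`, in terms of the offsets of both from a base point `p`. -/
lemma val_sub_base (n : ℕ) (p x y : ZMod (n + 3)) :
    (x - y).val = if (y - p).val ≤ (x - p).val then (x - p).val - (y - p).val
      else (x - p).val + (n + 3) - (y - p).val := by
  have h : x - y = (x - p) - (y - p) := by ring
  rw [h]
  generalize x - p = u
  generalize y - p = v
  have hu := ZMod.val_lt u
  have hv := ZMod.val_lt v
  have hw := ZMod.val_lt (u - v)
  have h1 : u.val = ((u - v).val + v.val) % (n + 3) := by
    rw [← ZMod.val_add, sub_add_cancel]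
  rcases lt_or_ge ((u - v).val + v.val) (n + 3) with h2 | h2
  · rw [Nat.mod_eq_of_lt h2] at h1
    split_ifs <;> omega
  · rw [Nat.mod_eq_sub_mod h2, Nat.mod_eq_of_lt (by omega)] at h1
    split_ifs <;> omega

lemma val_one' (n : ℕ) : (1 : ZMod (n + 3)).val = 1 := by
  have : Fact (1 < n + 3) := ⟨by omega⟩
  exact ZMod.val_one _

lemma isDiag_iff (n : ℕ) (i j : ZMod (n + 3)) :
    IsDiag n i j ↔ 2 ≤ (j - i).val ∧ (j - i).val ≤ n + 1 := by
  have h0 : i = j ↔ (j - i).val = 0 := by rw [ZMod.val_eq_zero, sub_eq_zero, eq_comm]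
  have h1 : j = i + 1 ↔ (j - i).val = 1 := by
    rw [← val_one' n, (ZMod.val_injective (n + 3)).eq_iff, sub_eq_iff_eq_add']
  have h2 : i = j + 1 ↔ (i - j).val = 1 := by
    rw [← val_one' n, (ZMod.val_injective (n + 3)).eq_iff, sub_eq_iff_eq_add']
  have h3 := val_sub_base n i i j
  have h4 := ZMod.val_lt (j - i)
  simp only [sub_self, ZMod.val_zero] at h3
  unfold IsDiag IsEdge
  rw [Ne, h0, h1, h2, h3]
  split_ifs <;> omega

lemma mem_cycInt (n : ℕ) (k l v : ZMod (n + 3)) :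
    v ∈ cycInt n k l ↔ 1 ≤ (v - k).val ∧ (v - k).val ≤ (l - k).val := by
  simp [cycInt]

lemma Clockwise.rotate {n : ℕ} {p q r s : ZMod (n + 3)} (h : Clockwise n p q r s) :
    Clockwise n q r s p := by
  obtain ⟨h1, h2, h3⟩ := h
  have h4 := ZMod.val_lt (s - p)
  have e1 := val_sub_base n p r q
  have e2 := val_sub_base n p s q
  have e3 := val_sub_base n p p q
  simp only [sub_self, ZMod.val_zero] at e3
  refine ⟨?_, ?_, ?_⟩ <;> split_ifs at e1 e2 e3 <;> omega

/-- A segment joining opposite blocks of a cut polygon is a diagonal. -/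
lemma Clockwise.isDiag {n : ℕ} {p q r s a c : ZMod (n + 3)} (h : Clockwise n p q r s)
    (ha : a ∈ cycInt n p q) (hc : c ∈ cycInt n r s) : IsDiag n a c := by
  rw [mem_cycInt] at ha hc
  rw [isDiag_iff]
  obtain ⟨h1, h2, h3⟩ := h
  have h4 := ZMod.val_lt (s - p)
  have h5 := ZMod.val_lt (c - p)
  have e1 := val_sub_base n p c r
  have e2 := val_sub_base n p s r
  have e3 := val_sub_base n p c a
  constructor <;> split_ifs at e1 e2 e3 <;> omega

/-- Vertices taken from four consecutive blocks of a cut polygon are again in clockwise order. -/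
lemma Clockwise.of_mem {n : ℕ} {p q r s a b c d : ZMod (n + 3)} (h : Clockwise n p q r s)
    (ha : a ∈ cycInt n p q) (hb : b ∈ cycInt n q r) (hc : c ∈ cycInt n r s)
    (hd : d ∈ cycInt n s p) : Clockwise n a b c d := by
  rw [mem_cycInt] at ha hb hc hd
  obtain ⟨h1, h2, h3⟩ := h
  have h4 := ZMod.val_lt (s - p)
  have h5 := ZMod.val_lt (b - p)
  have h6 := ZMod.val_lt (c - p)
  have h7 := ZMod.val_lt (d - p)
  have e1 := val_sub_base n p b q
  have e2 := val_sub_base n p r q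
  have e3 := val_sub_base n p c r
  have e4 := val_sub_base n p s r
  have e5 := val_sub_base n p d s
  have e6 := val_sub_base n p p s
  simp only [sub_self, ZMod.val_zero] at e6
  have f1 := val_sub_base n p b a
  have f2 := val_sub_base n p c a
  have f3 := val_sub_base n p d a
  have hb' : (q - p).val < (b - p).val ∧ (b - p).val ≤ (r - p).val := by
    split_ifs at e1 e2 <;> omega
  have hc' : (r - p).val < (c - p).val ∧ (c - p).val ≤ (s - p).val := by
    split_ifs at e3 e4 <;> omega
  -- The block `(s, p]` contains the base point, whose offset is `0` rather than `n + 3`.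
  have hd' : (s - p).val < (d - p).val ∨ (d - p).val = 0 := by
    split_ifs at e5 e6 <;> omega
  clear e1 e2 e3 e4 e5 e6
  rw [if_pos (by omega)] at f1 f2
  refine ⟨by omega, by omega, ?_⟩
  split_ifs at f3 <;> omega

/-! ### Telescoping sums and potentials -/

/-- Differences telescope along a cyclic interval. -/
lemma sum_cycInt_sub (n : ℕ) (g : ZMod (n + 3) → ℝ) (k l : ZMod (n + 3)) :
    ∑ a ∈ cycInt n k l, (g (a - 1) - g a) = g k - g l := by
  have hlt := ZMod.val_lt (l - k)
  have himg : cycInt n k l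
      = (range (l - k).val).image fun i : ℕ => k + ((i + 1 : ℕ) : ZMod (n + 3)) := by
    ext v
    simp only [mem_cycInt, mem_image, mem_range]
    constructor
    · rintro ⟨h1, h2⟩
      refine ⟨(v - k).val - 1, by omega, ?_⟩
      rw [Nat.sub_add_cancel h1, ZMod.natCast_zmod_val]
      ring
    · rintro ⟨i, hi, rfl⟩
      rw [add_sub_cancel_left, ZMod.val_natCast_of_lt (by omega)]
      omega
  rw [himg, sum_image]
  · have h : ∀ i : ℕ, g (k + ((i + 1 : ℕ) : ZMod (n + 3)) - 1) - g (k + ((i + 1 : ℕ) : ZMod (n + 3)))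
        = (fun i : ℕ => g (k + (i : ZMod (n + 3)))) i
          - (fun i : ℕ => g (k + (i : ZMod (n + 3)))) (i + 1) := by
      intro i
      have : k + ((i + 1 : ℕ) : ZMod (n + 3)) - 1 = k + (i : ZMod (n + 3)) := by
        push_cast; ring
      simp only [this]
    simp only [h]
    rw [sum_range_sub']
    simp
  · intro i hi j hj hij
    simp only [coe_range, Set.mem_Iio] at hi hj
    have h := congrArg ZMod.val (add_left_cancel hij)
    rw [ZMod.val_natCast_of_lt (by omega), ZMod.val_natCast_of_lt (by omega)] at h
    omega

lemma sum_univ_sub (n : ℕ) (g : ZMod (n + 3) → ℝ) : ∑ a, (g (a - 1) - g a) = 0 := by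
  rw [sum_sub_distrib, sub_eq_zero]
  exact (Equiv.subRight (1 : ZMod (n + 3))).sum_comp g

lemma sum_compl_cycInt_sub (n : ℕ) (g : ZMod (n + 3) → ℝ) (k l : ZMod (n + 3)) :
    ∑ a ∈ (cycInt n k l)ᶜ, (g (a - 1) - g a) = g l - g k := by
  have h := sum_add_sum_compl (cycInt n k l) fun a => g (a - 1) - g a
  rw [sum_univ_sub, sum_cycInt_sub] at h
  linarith

lemma sndDiff_eq (n : ℕ) (f : ZMod (n + 3) → ZMod (n + 3) → ℝ) (a b : ZMod (n + 3)) :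
    sndDiff n f a b = (f (a - 1) (b - 1) - f a (b - 1)) - (f (a - 1) b - f a b) := by
  unfold sndDiff; ring

lemma sum_block (n : ℕ) (f : ZMod (n + 3) → ZMod (n + 3) → ℝ) (p q r s : ZMod (n + 3)) :
    ∑ a ∈ cycInt n p q, ∑ b ∈ cycInt n r s, sndDiff n f a b
      = f p r + f q s - f p s - f q r := by
  simp only [sndDiff_eq]
  simp only [fun a => sum_cycInt_sub n (fun b => f (a - 1) b - f a b) r s]
  have h := sum_cycInt_sub n (fun a => f a r - f a s) p q
  rw [← sub_eq_zero] at h ⊢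
  rw [← h]
  simp only [sum_sub_distrib]
  ring

lemma Icyc_sndDiff (n : ℕ) (f : ZMod (n + 3) → ZMod (n + 3) → ℝ) (k l : ZMod (n + 3)) :
    Icyc n (sndDiff n f) k l = f k l + f l k - f k k - f l l := by
  unfold Icyc
  simp only [sndDiff_eq]
  simp only [fun a => sum_compl_cycInt_sub n (fun b => f (a - 1) b - f a b) k l]
  have h := sum_cycInt_sub n (fun a => f a l - f a k) k l
  rw [← sub_eq_zero] at h ⊢
  rw [← h]
  simp only [sum_sub_distrib]
  ring

/-- A function with total sum zero is the cyclic difference of its partial sums. -/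
lemma exists_potential (n : ℕ) (u : ZMod (n + 3) → ℝ) (hu : ∑ a, u a = 0) (a : ZMod (n + 3)) :
    u a = ∑ c ∈ cycInt n 0 a, u c - ∑ c ∈ cycInt n 0 (a - 1), u c := by
  have hmem : ∀ c x : ZMod (n + 3), c ∈ cycInt n 0 x ↔ 1 ≤ c.val ∧ c.val ≤ x.val := by
    intro c x; rw [mem_cycInt, sub_zero, sub_zero]
  have hb := val_sub_base n 0 a 1
  have hlt := ZMod.val_lt a
  simp only [sub_zero, val_one'] at hb
  by_cases h0 : a = 0
  · -- Passing from `a - 1 = -1` to `a = 0`, the partial sum over all nonzero vertices drops to `0`.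
    subst h0
    have h1 : cycInt n 0 0 = ∅ := by
      ext c; simp only [hmem, ZMod.val_zero, notMem_empty, iff_false]; omega
    have h2 : cycInt n 0 (0 - 1) = univ.erase 0 := by
      ext c
      have hc := ZMod.val_lt c
      have hc0 : c = 0 ↔ c.val = 0 := (ZMod.val_eq_zero c).symm
      simp only [hmem, mem_erase, mem_univ, and_true, hb, ZMod.val_zero, Ne, hc0]
      split_ifs <;> omega
    rw [h1, h2, sum_erase_eq_sub (mem_univ _), hu]
    simp
  · have ha : a.val ≠ 0 := by rwa [Ne, ZMod.val_eq_zero]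
    have h2 : cycInt n 0 a = insert a (cycInt n 0 (a - 1)) := by
      ext c
      have hca : c = a ↔ c.val = a.val := (ZMod.val_injective (n + 3)).eq_iff.symm
      simp only [hmem, mem_insert, hca, hb]
      split_ifs <;> omega
    rw [h2, sum_insert]
    · ring
    · rw [hmem, hb]
      split_ifs <;> omega

/-- A symmetric matrix with zero row sums is the mixed second difference of a symmetric one. -/
lemma exists_sndDiff (n : ℕ) (w : ZMod (n + 3) → ZMod (n + 3) → ℝ) (hs : ∀ i j, w i j = w j i)
    (hb : ∀ p, ∑ j, w p j = 0) :
    ∃ F : ZMod (n + 3) → ZMod (n + 3) → ℝ, (∀ i j, F i j = F j i) ∧ w = sndDiff n F := by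
  refine ⟨fun i j => ∑ a ∈ cycInt n 0 i, ∑ b ∈ cycInt n 0 j, w a b, ?_, ?_⟩
  · intro i j
    dsimp only
    rw [sum_comm]
    simp only [hs]
  · funext i j
    have h1 : ∀ a, w a j = ∑ b ∈ cycInt n 0 j, w a b - ∑ b ∈ cycInt n 0 (j - 1), w a b :=
      fun a => exists_potential n (w a) (hb a) j
    have h2 := exists_potential n (fun a => w a j) (by simpa only [hs _ j] using hb j) i
    rw [h2]
    unfold sndDiff
    simp only [h1, sum_sub_distrib]
    ring

/-! ### From laminations to tropical points -/

/-- The three facts about `½ I(w)` that follow from symmetry and zero row sums alone: it is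
symmetric, vanishes on the diagonal, and has mixed second difference `w`. -/
lemma Lam.eq_sndDiff {n : ℕ} (G : Lam n) :
    (∀ k l, (1 / 2) * Icyc n G.w k l = (1 / 2) * Icyc n G.w l k) ∧
    (∀ k, (1 / 2) * Icyc n G.w k k = 0) ∧
    G.w = sndDiff n fun k l => (1 / 2) * Icyc n G.w k l := by
  obtain ⟨F, hF, hw⟩ := exists_sndDiff n G.w G.symm G.balanced
  have hI : ∀ k l, Icyc n G.w k l = F k l + F l k - F k k - F l l := by
    rw [hw]; exact Icyc_sndDiff n F
  refine ⟨fun k l => by rw [hI, hI]; ring, fun k => by rw [hI]; ring, ?_⟩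
  funext a b
  simp only [sndDiff, hI]
  rw [hw]
  simp only [sndDiff]
  rw [hF b a, hF (b - 1) a, hF b (a - 1), hF (b - 1) (a - 1)]
  ring

lemma Lam.block_nonneg {n : ℕ} (G : Lam n) {p q r s : ZMod (n + 3)} (h : Clockwise n p q r s) :
    0 ≤ ∑ a ∈ cycInt n p q, ∑ c ∈ cycInt n r s, G.w a c :=
  sum_nonneg fun _ ha => sum_nonneg fun _ hc => G.nonneg _ _ (h.isDiag ha hc)

/-- One of the two pairs of opposite blocks carries no weight. -/
lemma Lam.block_noncross {n : ℕ} (G : Lam n) {p q r s : ZMod (n + 3)} (h : Clockwise n p q r s) :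
    ∑ a ∈ cycInt n p q, ∑ c ∈ cycInt n r s, G.w a c = 0 ∨
    ∑ b ∈ cycInt n q r, ∑ d ∈ cycInt n s p, G.w b d = 0 := by
  by_cases hz : ∀ a ∈ cycInt n p q, ∀ c ∈ cycInt n r s, G.w a c = 0
  · exact Or.inl (sum_eq_zero fun a ha => sum_eq_zero fun c hc => hz a ha c hc)
  · push Not at hz
    obtain ⟨a, ha, c, hc, hne⟩ := hz
    refine Or.inr (sum_eq_zero fun b hb => sum_eq_zero fun d hd => ?_)
    exact (G.noncross a c b d (h.isDiag ha hc) (h.rotate.isDiag hb hd)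
      (Or.inl (h.of_mem ha hb hc hd))).resolve_left hne

/-- The tropical point `½ I(G)` of a lamination `G`. -/
noncomputable def Lam.toTropPt {n : ℕ} (G : Lam n) : TropPt n where
  x k l := (1 / 2) * Icyc n G.w k l
  symm := G.eq_sndDiff.1
  diag_zero := G.eq_sndDiff.2.1
  edge_zero := by
    obtain ⟨hs, hd, hw⟩ := G.eq_sndDiff
    -- The side `{a, a+1}` is controlled by the diagonal entry of `w` at `a + 1`.
    have key : ∀ a, (1 / 2) * Icyc n G.w a (a + 1) = 0 := by
      intro a
      have h := G.diag_zero (a + 1)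
      rw [hw] at h
      simp only [sndDiff, add_sub_cancel_right] at h
      rw [hd, hd, hs (a + 1) a] at h
      linarith
    rintro i j (rfl | rfl)
    · rw [hs, key]
    · exact key i
  pluecker := by
    intro p q r s h
    obtain ⟨hs, -, hw⟩ := G.eq_sndDiff
    have h1 := G.block_nonneg h
    have h2 := G.block_nonneg h.rotate
    have h3 := G.block_noncross h
    rw [hw, sum_block] at h1 h2
    rw [hw, sum_block, sum_block] at h3
    rw [hs r p, hs q p] at h2 h3
    rcases h3 with h3 | h3
    · rw [max_eq_right (by linarith)]; linarith
    · rw [max_eq_left (by linarith)]; linarith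

/-! ### From tropical points to laminations -/

lemma TropPt.nonneg {n : ℕ} (X : TropPt n) (i j : ZMod (n + 3)) (h : IsDiag n i j) :
    0 ≤ sndDiff n X.x i j := by
  rw [isDiag_iff] at h
  have hc : Clockwise n (i - 1) i (j - 1) j := by
    have a1 : j - 1 - (i - 1) = j - i := by ring
    have a2 : i - (i - 1) = 1 := by ring
    have a3 : j - (i - 1) = (j - i) + 1 := by ring
    refine ⟨?_, ?_, ?_⟩
    · rw [a2, val_one']; omega
    · rw [a2, a1, val_one']; omega
    · rw [a1, a3, ZMod.val_add_of_lt] <;> rw [val_one'] <;> omega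
  have hp := X.pluecker _ _ _ _ hc
  have hm := le_max_right (X.x (i - 1) i + X.x (j - 1) j) (X.x i (j - 1) + X.x (i - 1) j)
  unfold sndDiff
  linarith

/-- A nonnegative block weight that vanishes forces each segment between the blocks to be zero. -/
lemma TropPt.eq_zero_of_block {n : ℕ} (X : TropPt n) {p q r s a c : ZMod (n + 3)}
    (h : Clockwise n p q r s) (ha : a ∈ cycInt n p q) (hc : c ∈ cycInt n r s)
    (h0 : X.x p r + X.x q s - X.x p s - X.x q r = 0) : sndDiff n X.x a c = 0 := by
  rw [← sum_block] at h0
  have h1 := (sum_eq_zero_iff_of_nonneg fun i hi => sum_nonneg fun j hj =>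
    X.nonneg i j (h.isDiag hi hj)).1 h0 a ha
  exact (sum_eq_zero_iff_of_nonneg fun j hj => X.nonneg a j (h.isDiag ha hj)).1 h1 c hc

lemma TropPt.noncross {n : ℕ} (X : TropPt n) {a b c d : ZMod (n + 3)}
    (h : Clockwise n a b c d) : sndDiff n X.x a c = 0 ∨ sndDiff n X.x b d = 0 := by
  have hs : ∀ u v : ZMod (n + 3), u - 1 - (v - 1) = u - v := fun u v => by ring
  have hp : Clockwise n (a - 1) (b - 1) (c - 1) (d - 1) := by
    unfold Clockwise at h ⊢
    simpa only [hs] using h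
  have hmem : ∀ {u v y z : ZMod (n + 3)}, Clockwise n u v y z → u ∈ cycInt n (u - 1) (v - 1) := by
    intro u v y z huv
    rw [mem_cycInt, hs, sub_sub_cancel, val_one']
    exact ⟨le_rfl, huv.1⟩
  have hP := X.pluecker _ _ _ _ hp
  rcases max_choice (X.x (a - 1) (b - 1) + X.x (c - 1) (d - 1))
    (X.x (b - 1) (c - 1) + X.x (a - 1) (d - 1)) with hm | hm
  · right
    refine X.eq_zero_of_block hp.rotate (hmem h.rotate) (hmem h.rotate.rotate.rotate) ?_
    rw [X.symm (c - 1) (a - 1), X.symm (b - 1) (a - 1)]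
    linarith
  · left
    refine X.eq_zero_of_block hp (hmem h) (hmem h.rotate.rotate) ?_
    linarith

lemma TropPt.sndDiff_symm {n : ℕ} (X : TropPt n) (i j : ZMod (n + 3)) :
    sndDiff n X.x i j = sndDiff n X.x j i := by
  unfold sndDiff
  rw [X.symm (i - 1) (j - 1), X.symm i j, X.symm (i - 1) j, X.symm i (j - 1)]
  ring

/-- The lamination `Δ²X` of a tropical point `X`. -/
def TropPt.toLam {n : ℕ} (X : TropPt n) : Lam n where
  w := sndDiff n X.x
  symm := X.sndDiff_symm
  diag_zero i := by
    have h1 : X.x (i - 1) i = 0 := X.edge_zero _ _ (Or.inr (by ring))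
    simp only [sndDiff, X.diag_zero, h1, X.symm i (i - 1)]
    ring
  nonneg := X.nonneg
  noncross i j k l _ _ := by
    rintro (h | h)
    · exact X.noncross h
    · rw [X.sndDiff_symm k l]
      exact X.noncross h
  balanced p := by
    simp only [sndDiff_eq]
    exact sum_univ_sub n fun j => X.x (p - 1) j - X.x p j

/-! ### The bijection -/

/-- The map `G ↦ a(G)`, `a_{kl}(G) = (1/2)·I_{kl}(G)`, is a bijection from the set of
`A`-laminations over `ℝ` onto `L(ℝ)`: every lamination yields a tropical point, and
every tropical point `X` comes from a unique lamination.  Under this bijection the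
tropicalized cluster variable `A_{ij}^t` (the coordinate `x_{ij}`) evaluated at a
lamination `l` equals `a_{ij}(l)`. -/
theorem laminations_biject_with_tropical_points
    (n : ℕ) (hn : 1 ≤ n) :
    (∀ G : Lam n, ∃ X : TropPt n, ∀ k l, X.x k l = (1 / 2) * Icyc n G.w k l)
    ∧ ∀ X : TropPt n, ∃! G : Lam n, ∀ k l, X.x k l = (1 / 2) * Icyc n G.w k l := by
  refine ⟨fun G => ⟨G.toTropPt, fun _ _ => rfl⟩, fun X => ⟨X.toLam, ?_, ?_⟩⟩
  · intro k l
    change X.x k l = (1 / 2) * Icyc n (sndDiff n X.x) k l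
    rw [Icyc_sndDiff, X.diag_zero, X.diag_zero, X.symm l k]
    ring
  · intro G hG
    have hw : G.w = X.toLam.w := by
      have hx : X.x = fun k l => (1 / 2) * Icyc n G.w k l := funext fun k => funext (hG k)
      change G.w = sndDiff n X.x
      rw [hx]
      exact G.eq_sndDiff.2.2
    cases G
    simp only at hw
    subst hw
    rfl
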